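/- For all integers n ≥ 1 and 0 ≤ k ≤ n, the probability that the random convex chain T_n has exactly k vertices besides the two corners is P(N_n = k) = Σ_{ℓ=k}^{n} (−1)^{ℓ+k}·C(n,ℓ)·c(k,ℓ). -/

import Mathlib

/-!
Almost surely exactly one sample point `v` is the neighbour of the corner `(1,0)` in the chain: the
one for which all other points lie strictly on one side of the line through `(1,0)` and `v`. Each of
these other points falls either into the near triangle with vertices `(1,0)`, `(0,1)`, `v`, where it
cannot be a vertex, or into the far triangle which that line and the line through `v` and `(0,1)`
cut off at the edge of `T` on the second axis. The affine map from `T` onto the far triangle takes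
the corners to `v` and `(0,1)`, so the points in the far triangle form a smaller sample of the same
kind, with these two corners. Integrating over `v`, the probability that `m` of `n + 1` points are
far is `w(n,m) = 2(n+1-m)/((n+1)(n+2))`, and so the probabilities `p(n,k) = P(N_n = k)` satisfy
`p(n+1,k+1) = ∑ₘ w(n,m) p(m,k)`. The alternating sum obeys the same recursion because
`c(k+1,l+1) - c(k+1,l) = 2/((l+1)(l+2)) c(k,l)` and `∑ₘ w(n,m) C(m,l) = 2/((l+1)(l+2)) C(n,l)`.
-/

open MeasureTheory

noncomputable section

/-- The triangle with vertices (0,0), (1,0), (0,1). -/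
def T : Set (ℝ × ℝ) := convexHull ℝ {(0, 0), (1, 0), (0, 1)}

/-- The uniform distribution on `T`: twice Lebesgue measure restricted to `T`. -/
def μT : Measure (ℝ × ℝ) := (2 : ENNReal) • (volume.restrict T)

/-- Joint law of `n` independent uniform points in `T`. -/
def P (n : ℕ) : Measure (Fin n → ℝ × ℝ) := Measure.pi fun _ => μT

/-- The random convex chain: convex hull of the points together with `(1,0)` and `(0,1)`. -/
def Tchain (n : ℕ) (ω : Fin n → ℝ × ℝ) : Set (ℝ × ℝ) :=
  convexHull ℝ (Set.range ω ∪ {(1, 0), (0, 1)})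

/-- Normalized area `V_n = 2 vol(T_n)`. -/
def V (n : ℕ) (ω : Fin n → ℝ × ℝ) : ℝ := 2 * (volume (Tchain n ω)).toReal

/-- Number of vertices of `T_n` other than the two corners. -/
def N (n : ℕ) (ω : Fin n → ℝ × ℝ) : ℕ :=
  (Set.extremePoints ℝ (Tchain n ω)).ncard - 2

/-- Normalized moments `q_{n,k} = C(n+k,k) E[V_n^k]`. -/
def q (n k : ℕ) : ℝ := ((n + k).choose k : ℝ) * ∫ ω, (V n ω) ^ k ∂ P n

/-- Probability generating function of `N_n`. -/
def G (n : ℕ) (t : ℝ) : ℝ := ∫ ω, t ^ (N n ω) ∂ P n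

/-- Harmonic number. -/
def H (j : ℕ) : ℝ := ∑ i ∈ Finset.range j, 1 / ((i : ℝ) + 1)

/-- Generalized harmonic number of order 2. -/
def H2 (j : ℕ) : ℝ := ∑ i ∈ Finset.range j, 1 / ((i : ℝ) + 1) ^ 2

/-- `c(k,ℓ)`: elementary symmetric polynomial `e_k` of `2/(j(j+1))`, `j = 1,…,ℓ`. -/
def c (k l : ℕ) : ℝ :=
  ∑ S ∈ (Finset.Icc 1 l).powersetCard k, ∏ j ∈ S, 2 / ((j : ℝ) * ((j : ℝ) + 1))

theorem c_zero (l : ℕ) : c 0 l = 1 := by simp [c]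

theorem c_eq_zero_of_lt {k l : ℕ} (h : l < k) : c k l = 0 := by
  rw [c, Finset.powersetCard_eq_empty.2 (by simpa using h), Finset.sum_empty]

theorem multiset_esymm_cons_succ {R : Type*} [CommSemiring R] (a : R) (s : Multiset R) (k : ℕ) :
    (a ::ₘ s).esymm (k + 1) = s.esymm (k + 1) + a * s.esymm k := by
  simp [Multiset.esymm, Multiset.powersetCard_cons, Multiset.sum_map_mul_left]

theorem c_eq_esymm (k l : ℕ) :
    c k l = ((Finset.Icc 1 l).val.map fun j : ℕ ↦ 2 / ((j : ℝ) * (j + 1))).esymm k :=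
  (Finset.esymm_map_val _ _ _).symm

theorem c_succ_succ (k l : ℕ) :
    c (k + 1) (l + 1) = c (k + 1) l + 2 / (((l : ℝ) + 1) * (l + 2)) * c k l := by
  have hIcc : (Finset.Icc 1 (l + 1)).val = (l + 1) ::ₘ (Finset.Icc 1 l).val := by
    rw [← Finset.insert_Icc_right_eq_Icc_add_one (by omega), Finset.insert_val_of_notMem (by simp)]
  rw [c_eq_esymm, hIcc, Multiset.map_cons, multiset_esymm_cons_succ, ← c_eq_esymm, ← c_eq_esymm]
  push_cast
  ring

theorem sum_range_succ_choose (n l : ℕ) :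
    ∑ m ∈ Finset.range (n + 1), m.choose l = (n + 1).choose (l + 1) := by
  rw [← Nat.sum_Icc_choose, Nat.range_succ_eq_Icc_zero]
  refine (Finset.sum_subset (Finset.Icc_subset_Icc_left l.zero_le) fun m hm hm' ↦ ?_).symm
  exact Nat.choose_eq_zero_of_lt (by grind)

theorem sum_range_sub_mul_choose (n l : ℕ) :
    ∑ m ∈ Finset.range (n + 1), (n + 1 - m) * m.choose l = (n + 2).choose (l + 2) := by
  induction n with
  | zero => cases l <;> simp [Nat.choose_eq_zero_of_lt]
  | succ n ih =>
    calc _ = ∑ m ∈ Finset.range (n + 2), (n + 1 - m) * m.choose l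
          + ∑ m ∈ Finset.range (n + 2), m.choose l := by
          rw [← Finset.sum_add_distrib]
          refine Finset.sum_congr rfl fun m hm ↦ ?_
          rw [Finset.mem_range] at hm
          rw [Nat.sub_add_comm (by omega), add_one_mul]
      _ = (n + 2).choose (l + 2) + (n + 2).choose (l + 1) := by
          rw [Finset.sum_range_succ, ih, Nat.sub_self, zero_mul, add_zero, sum_range_succ_choose]
      _ = _ := by rw [Nat.choose_succ_succ (n + 2) (l + 1), add_comm]

theorem sum_neg_one_pow_mul_choose_succ (f : ℕ → ℝ) (n : ℕ) :
    ∑ l ∈ Finset.range (n + 2), (-1) ^ l * ((n + 1).choose l : ℝ) * f l =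
      ∑ l ∈ Finset.range (n + 1), (-1) ^ l * (n.choose l : ℝ) * (f l - f (l + 1)) := by
  have h := Finset.sum_choose_succ_mul (fun l _ ↦ (-1) ^ l * f l) n
  simp only [← Finset.sum_add_distrib] at h
  calc _ = ∑ l ∈ Finset.range (n + 2), ((n + 1).choose l : ℝ) * ((-1) ^ l * f l) :=
        Finset.sum_congr rfl fun l _ ↦ by ring
    _ = _ := h.trans (Finset.sum_congr rfl fun l _ ↦ by ring)

/-- The alternating sum `∑ₗ (-1)^(l+k) C(n,l) c(k,l)` that turns out to be `P(N_n = k)`. The terms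
with `l < k`, which vanish, are included to give all `k` the same index set. -/
def vertexFormula (n k : ℕ) : ℝ :=
  ∑ l ∈ Finset.range (n + 1), (-1) ^ (l + k) * (n.choose l : ℝ) * c k l

theorem vertexFormula_eq_sum_Icc (n k : ℕ) :
    vertexFormula n k = ∑ l ∈ Finset.Icc k n, (-1) ^ (l + k) * (n.choose l : ℝ) * c k l := by
  refine (Finset.sum_subset (fun l ↦ by simp) fun l hl hl' ↦ ?_).symm
  rw [c_eq_zero_of_lt, mul_zero]
  simp only [Finset.mem_range, Finset.mem_Icc] at hl hl'
  omega

theorem vertexFormula_zero_zero : vertexFormula 0 0 = 1 := by simp [vertexFormula, c_zero]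

theorem vertexFormula_zero_succ (k : ℕ) : vertexFormula 0 (k + 1) = 0 := by
  simp [vertexFormula, c_eq_zero_of_lt]

theorem vertexFormula_succ_zero (n : ℕ) : vertexFormula (n + 1) 0 = 0 := by
  simpa [vertexFormula, c_zero] using sum_neg_one_pow_mul_choose_succ (fun _ ↦ 1) n

/-- The probability that, among `n + 1` uniform points of the triangle, exactly `m` are cut off
from the corner `(1,0)` by the chain vertex adjacent to that corner. -/
def farCountProb (n m : ℕ) : ℝ := 2 * (n + 1 - m) / ((n + 1) * (n + 2))

theorem farCountProb_nonneg {n m : ℕ} (hm : m ≤ n) : 0 ≤ farCountProb n m := by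
  have hle : (m : ℝ) ≤ n := mod_cast hm
  exact div_nonneg (by linarith) (by positivity)

theorem sum_farCountProb_mul_choose (n l : ℕ) :
    ∑ m ∈ Finset.range (n + 1), farCountProb n m * m.choose l =
      2 / ((l + 1) * (l + 2)) * n.choose l := by
  have habsorb : (n + 2).choose (l + 2) * ((l + 2) * (l + 1) : ℝ) =
      (n + 2) * ((n + 1) * n.choose l) := by
    have h₁ := Nat.add_one_mul_choose_eq (n + 1) (l + 1)
    have h₂ := Nat.add_one_mul_choose_eq n l
    rify at h₁ h₂
    linear_combination -(l + 1 : ℝ) * h₁ - (n + 2 : ℝ) * h₂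
  have hsum := sum_range_sub_mul_choose n l
  rify at hsum
  calc _ = 2 / ((n + 1) * (n + 2)) *
        ∑ m ∈ Finset.range (n + 1), ((n + 1 - m : ℕ) : ℝ) * m.choose l := by
        rw [Finset.mul_sum]
        refine Finset.sum_congr rfl fun m hm ↦ ?_
        rw [Nat.cast_sub (Finset.mem_range.1 hm).le, farCountProb]
        push_cast
        ring
    _ = _ := by
        rw [hsum]
        field_simp
        linear_combination habsorb

theorem vertexFormula_succ_succ (n k : ℕ) :
    vertexFormula (n + 1) (k + 1) =
      ∑ m ∈ Finset.range (n + 1), farCountProb n m * vertexFormula m k := by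
  have hextend : ∀ m ∈ Finset.range (n + 1), vertexFormula m k =
      ∑ l ∈ Finset.range (n + 1), (-1) ^ (l + k) * (m.choose l : ℝ) * c k l := by
    intro m hm
    refine Finset.sum_subset (Finset.range_mono (Finset.mem_range.1 hm)) fun l _ hl ↦ ?_
    rw [Nat.choose_eq_zero_of_lt (by simpa using hl), Nat.cast_zero, mul_zero, zero_mul]
  calc _ = ∑ l ∈ Finset.range (n + 1), (-1) ^ l * (n.choose l : ℝ) *
        ((-1) ^ (k + 1) * c (k + 1) l - (-1) ^ (k + 1) * c (k + 1) (l + 1)) := by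
        rw [← sum_neg_one_pow_mul_choose_succ fun l ↦ (-1) ^ (k + 1) * c (k + 1) l]
        exact Finset.sum_congr rfl fun l _ ↦ by ring
    _ = ∑ l ∈ Finset.range (n + 1), ∑ m ∈ Finset.range (n + 1),
          (-1) ^ (l + k) * c k l * (farCountProb n m * m.choose l) := by
        refine Finset.sum_congr rfl fun l _ ↦ ?_
        rw [← Finset.mul_sum, sum_farCountProb_mul_choose, c_succ_succ]
        ring
    _ = _ := by
        rw [Finset.sum_comm]
        refine Finset.sum_congr rfl fun m hm ↦ ?_
        rw [hextend m hm, Finset.mul_sum]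
        exact Finset.sum_congr rfl fun l _ ↦ by ring

section Hull

variable {E : Type*} [AddCommGroup E] [Module ℝ E] {S : Set E} {a x y p : E}

theorem exists_wbtw_of_mem_convexHull_insert (hS : S.Nonempty)
    (hx : x ∈ convexHull ℝ (insert a S)) : ∃ y ∈ convexHull ℝ S, Wbtw ℝ a x y := by
  simpa [convexHull_insert hS, mem_convexJoin, mem_segment_iff_wbtw] using hx

theorem eq_of_mem_convexHull_insert (f : E →ᵃ[ℝ] ℝ) (hS : ∀ y ∈ S, f a < f y) (hx : f x = f a)
    (h : x ∈ convexHull ℝ (insert a S)) : x = a := by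
  rcases S.eq_empty_or_nonempty with rfl | hne
  · simpa using h
  obtain ⟨y, hy, t, -, rfl⟩ := exists_wbtw_of_mem_convexHull_insert hne h
  have hfy : f a < f y := convexHull_min hS ((convex_Ioi (f a)).affine_preimage f) hy
  have ht : t = 0 := by
    have : t * (f y - f a) = 0 := by
      rwa [AffineMap.apply_lineMap, AffineMap.lineMap_apply_module', add_eq_right] at hx
    exact (mul_eq_zero.1 this).resolve_right (sub_pos.2 hfy).ne'
  simp [ht]

theorem mem_convexHull_of_wbtw_of_mem_convexHull_insert (hS : S.Nonempty)
    (hx : x ∈ convexHull ℝ (insert a S)) (hy : y ∈ convexHull ℝ S) (hayx : Wbtw ℝ a y x) :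
    x ∈ convexHull ℝ S := by
  obtain ⟨z, hz, haxz⟩ := exists_wbtw_of_mem_convexHull_insert hS hx
  exact (convex_convexHull ℝ S).mem_of_wbtw (haxz.trans_left_right hayx) hy hz

theorem mem_extremePoints_convexHull_iff (hp : p ∈ S) :
    p ∈ (convexHull ℝ S).extremePoints ℝ ↔ p ∉ convexHull ℝ (S \ {p}) := by
  refine ⟨fun h hmem ↦ ?_, fun h ↦ ?_⟩
  · rw [(convex_convexHull ℝ S).mem_extremePoints_iff_mem_sdiff_convexHull_sdiff] at h
    exact h.2 (convexHull_mono (Set.sdiff_subset_sdiff_left (subset_convexHull ℝ S)) hmem)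
  have hins : insert p (S \ {p}) = S := by
    rw [Set.insert_sdiff_singleton, Set.insert_eq_of_mem hp]
  rcases (S \ {p}).eq_empty_or_nonempty with hempty | hne
  · rw [← hins, hempty]
    simp
  refine mem_extremePoints_iff_forall_segment.2 ⟨subset_convexHull ℝ S hp, fun x hx y hy hxy ↦ ?_⟩
  rw [← hins] at hx hy
  rw [mem_segment_iff_wbtw] at hxy
  by_contra! hxyp
  obtain ⟨x', hx', hpx⟩ := exists_wbtw_of_mem_convexHull_insert hne hx
  obtain ⟨y', hy', hpy⟩ := exists_wbtw_of_mem_convexHull_insert hne hy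
  have hxpy : Wbtw ℝ x' p y' :=
    (hpx.symm.trans_expand_right hxy hxyp.1).trans_expand_left hpy hxyp.2.symm
  exact h ((convex_convexHull ℝ _).mem_of_wbtw hxpy hx' hy')

theorem mem_extremePoints_convexHull_of_forall_lt (f : E →ᵃ[ℝ] ℝ) (hp : p ∈ S)
    (h : ∀ y ∈ S \ {p}, f y < f p) : p ∈ (convexHull ℝ S).extremePoints ℝ := by
  refine (mem_extremePoints_convexHull_iff hp).2 fun hmem ↦ ?_
  have hlt : f p < f p := convexHull_min h ((convex_Iio (f p)).affine_preimage f) hmem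
  exact hlt.false

end Hull

section VertexCount

variable {ι κ E F : Type*} [AddCommGroup E] [Module ℝ E] [AddCommGroup F] [Module ℝ F]

/-- The indices of those points of the family `ω` that are not redundant in forming the convex hull
of the points `ω i` and of the corners `B`. For points in general position these are the vertices
of the hull other than the corners. -/
def vertexIndices (B : Set E) (ω : ι → E) : Set ι :=
  {i | ω i ∉ convexHull ℝ (ω '' {i}ᶜ ∪ B)}

/-- The number of vertices of the hull of the points `ω i` and of the corners `B`, not counting the
corners. -/
def vertexCount (B : Set E) (ω : ι → E) : ℕ := (vertexIndices B ω).ncard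

theorem vertexCount_image_affineMap {φ : E →ᵃ[ℝ] F} (hφ : Function.Injective φ) (B : Set E)
    (ω : ι → E) : vertexCount (φ '' B) (φ ∘ ω) = vertexCount B ω := by
  have himage (i : ι) : (φ ∘ ω) '' {i}ᶜ ∪ φ '' B = φ '' (ω '' {i}ᶜ ∪ B) := by
    rw [Set.image_union, Set.image_comp]
  have hindices : vertexIndices (φ '' B) (φ ∘ ω) = vertexIndices B ω := by
    ext i
    rw [vertexIndices, Set.mem_ofPred_eq, himage, ← AffineMap.image_convexHull,
      Function.comp_apply, hφ.mem_set_image, vertexIndices, Set.mem_ofPred_eq]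
  rw [vertexCount, hindices, vertexCount]

theorem vertexCount_comp_equiv (e : κ ≃ ι) (B : Set E) (ω : ι → E) :
    vertexCount B (ω ∘ e) = vertexCount B ω := by
  have hpre : vertexIndices B (ω ∘ e) = e ⁻¹' vertexIndices B ω := by
    ext i
    rw [vertexIndices, Set.mem_ofPred_eq, Set.image_comp, Set.image_compl_eq e.bijective,
      Set.image_singleton]
    rfl
  rw [vertexCount, hpre, Set.ncard_preimage_of_injective_subset_range e.injective (by simp),
    vertexCount]

theorem extremePoints_convexHull_range_union {B : Set E} {ω : ι → E} (hω : Function.Injective ω)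
    (hωB : ∀ i, ω i ∉ B) (hB : B ⊆ (convexHull ℝ (Set.range ω ∪ B)).extremePoints ℝ) :
    (convexHull ℝ (Set.range ω ∪ B)).extremePoints ℝ = ω '' vertexIndices B ω ∪ B := by
  have hmem (i : ι) : ω i ∈ (convexHull ℝ (Set.range ω ∪ B)).extremePoints ℝ ↔
      i ∈ vertexIndices B ω := by
    have hdiff : (Set.range ω ∪ B) \ {ω i} = ω '' {i}ᶜ ∪ B := by
      rw [Set.union_sdiff_distrib, Set.sdiff_singleton_eq_self (hωB i), ← Set.image_univ,
        ← Set.image_singleton, ← Set.image_sdiff hω, Set.compl_eq_univ_sdiff]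
    rw [mem_extremePoints_convexHull_iff (.inl ⟨i, rfl⟩), hdiff, vertexIndices, Set.mem_ofPred_eq]
  refine Set.Subset.antisymm (fun p hp ↦ ?_) (Set.union_subset ?_ hB)
  · rcases extremePoints_convexHull_subset hp with ⟨i, rfl⟩ | hpB
    · exact .inl ⟨i, (hmem i).1 hp, rfl⟩
    · exact .inr hpB
  · rintro _ ⟨i, hi, rfl⟩
    exact (hmem i).2 hi

theorem ncard_extremePoints_convexHull_range_union [Finite ι] {B : Set E} (hBfin : B.Finite)
    {ω : ι → E} (hω : Function.Injective ω) (hωB : ∀ i, ω i ∉ B)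
    (hB : B ⊆ (convexHull ℝ (Set.range ω ∪ B)).extremePoints ℝ) :
    ((convexHull ℝ (Set.range ω ∪ B)).extremePoints ℝ).ncard = vertexCount B ω + B.ncard := by
  have hdisj : Disjoint (ω '' vertexIndices B ω) B :=
    Set.disjoint_left.2 (by rintro _ ⟨i, -, rfl⟩; exact hωB i)
  rw [extremePoints_convexHull_range_union hω hωB hB,
    Set.ncard_union_eq hdisj (Set.toFinite _) hBfin, Set.ncard_image_of_injective _ hω, vertexCount]

theorem mem_vertexIndices_iff_of_wbtw {s : κ → ι} (hs : Function.Injective s) {i₀ : ι}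
    (hi₀s : i₀ ∉ Set.range s) {a b : E} {ω : ι → E}
    (hnear : ∀ i ∉ Set.range s, i ≠ i₀ → ω i ∈ convexHull ℝ {a, ω i₀, b})
    {k : κ} (hfar : ∃ y ∈ segment ℝ (ω i₀) b, Wbtw ℝ a y (ω (s k))) :
    s k ∈ vertexIndices {a, b} ω ↔ k ∈ vertexIndices {ω i₀, b} (ω ∘ s) := by
  set S : Set E := ω ∘ s '' {k}ᶜ ∪ {ω i₀, b} with hS
  refine not_congr ⟨fun hmem ↦ ?_, fun hmem ↦ ?_⟩
  · have hsub : ω '' {s k}ᶜ ∪ {a, b} ⊆ convexHull ℝ (insert a S) := by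
      rintro _ (⟨i, hi, rfl⟩ | rfl | rfl)
      · by_cases his : i ∈ Set.range s
        · obtain ⟨l, rfl⟩ := his
          exact subset_convexHull ℝ _ (.inr (.inl ⟨l, ne_of_apply_ne s hi, rfl⟩))
        · rcases eq_or_ne i i₀ with rfl | hne
          · exact subset_convexHull ℝ _ (by simp [hS])
          · exact convexHull_mono (Set.insert_subset_insert Set.subset_union_right)
              (hnear i his hne)
      · exact subset_convexHull ℝ _ (by simp)
      · exact subset_convexHull ℝ _ (by simp [hS])
    obtain ⟨y, hy, hay⟩ := hfar
    have hyS : y ∈ convexHull ℝ S := segment_subset_convexHull (by simp [hS]) (by simp [hS]) hy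
    exact mem_convexHull_of_wbtw_of_mem_convexHull_insert ⟨b, by simp⟩
      (convexHull_min hsub (convex_convexHull ℝ _) hmem) hyS hay
  · refine convexHull_mono ?_ hmem
    rintro _ (⟨l, hl, rfl⟩ | rfl | rfl)
    · exact .inl ⟨s l, hs.ne hl, rfl⟩
    · exact .inl ⟨i₀, fun h ↦ hi₀s ⟨k, h.symm⟩, rfl⟩
    · simp

theorem vertexCount_eq_add_one [Finite κ] {s : κ → ι} (hs : Function.Injective s) {i₀ : ι}
    (hi₀s : i₀ ∉ Set.range s) {a b : E} {ω : ι → E} (hi₀ : i₀ ∈ vertexIndices {a, b} ω)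
    (hnear : ∀ i ∉ Set.range s, i ≠ i₀ → ω i ∈ convexHull ℝ {a, ω i₀, b})
    (hfar : ∀ k, ∃ y ∈ segment ℝ (ω i₀) b, Wbtw ℝ a y (ω (s k))) :
    vertexCount {a, b} ω = vertexCount {ω i₀, b} (ω ∘ s) + 1 := by
  have hindices : vertexIndices {a, b} ω = insert i₀ (s '' vertexIndices {ω i₀, b} (ω ∘ s)) := by
    ext i
    by_cases his : i ∈ Set.range s
    · obtain ⟨k, rfl⟩ := his
      have hne : s k ≠ i₀ := fun h ↦ hi₀s ⟨k, h⟩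
      simp [hne, hs.eq_iff, mem_vertexIndices_iff_of_wbtw hs hi₀s hnear (hfar k)]
    rcases eq_or_ne i i₀ with rfl | hne
    · simp [hi₀]
    have hi : i ∉ vertexIndices {a, b} ω := fun hi ↦ hi (convexHull_mono
      (Set.insert_subset (by simp) (Set.pair_subset (.inl ⟨i₀, hne.symm, rfl⟩) (by simp)))
      (hnear i his hne))
    simp only [hi, hne, Set.mem_insert_iff, false_or, false_iff]
    exact fun h ↦ his (Set.image_subset_range _ _ h)
  have hi₀' : i₀ ∉ s '' vertexIndices {ω i₀, b} (ω ∘ s) :=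
    fun h ↦ hi₀s (Set.image_subset_range _ _ h)
  rw [vertexCount, hindices, Set.ncard_insert_of_notMem hi₀' (Set.toFinite _),
    Set.ncard_image_of_injective _ hs, vertexCount]

end VertexCount

section MeasurableVertexCount

variable {ι κ E : Type*} [AddCommGroup E] [Module ℝ E]

theorem convexHull_range_eq_image_stdSimplex [Fintype κ] (y : κ → E) :
    convexHull ℝ (Set.range y) = Fintype.linearCombination ℝ y '' stdSimplex ℝ κ := by
  classical
  rw [← convexHull_rangle_single_eq_stdSimplex, LinearMap.image_convexHull, ← Set.range_comp]
  congr 2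
  ext i
  simp [Fintype.linearCombination_apply_single]

variable [TopologicalSpace E] [IsTopologicalAddGroup E] [ContinuousSMul ℝ E] [T2Space E]

theorem isClosed_setOf_mem_convexHull_range [Finite κ] :
    IsClosed {z : E × (κ → E) | z.1 ∈ convexHull ℝ (Set.range z.2)} := by
  have := Fintype.ofFinite κ
  have hclosed : IsClosed {z : stdSimplex ℝ κ × (E × (κ → E)) |
      Fintype.linearCombination ℝ z.2.2 z.1.1 = z.2.1} := by
    simp only [Fintype.linearCombination_apply]
    have hweight (i : κ) : Continuous fun z : stdSimplex ℝ κ × (E × (κ → E)) ↦ z.1.1 i :=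
      (continuous_apply i).comp (continuous_subtype_val.comp continuous_fst)
    refine isClosed_eq (continuous_finsetSum _ fun i _ ↦ (hweight i).smul ?_) ?_ <;> fun_prop
  convert isClosedMap_snd_of_compactSpace _ hclosed using 1
  ext ⟨x, y⟩
  simp [convexHull_range_eq_image_stdSimplex]

variable [MeasurableSpace E] [BorelSpace E] [SecondCountableTopology E]

theorem measurableSet_setOf_mem_vertexIndices [Finite ι] {B : Set E} (hB : B.Finite) (i : ι) :
    MeasurableSet {ω : ι → E | i ∈ vertexIndices B ω} := by
  have := hB.to_subtype
  let split (ω : ι → E) : E × (({i}ᶜ : Set ι) ⊕ B → E) := (ω i, Sum.elim (fun j ↦ ω j) (↑))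
  have hsplit : Continuous split := by
    refine (continuous_apply i).prodMk (continuous_pi ?_)
    rintro (j | b)
    · exact continuous_apply _
    · exact continuous_const
  convert! (isClosed_setOf_mem_convexHull_range.preimage hsplit).measurableSet.compl using 1
  ext ω
  simp [split, vertexIndices, Set.image_eq_range]

theorem measurable_vertexCount [Finite ι] {B : Set E} (hB : B.Finite) :
    Measurable (vertexCount B : (ι → E) → ℕ) := by
  classical
  have := Fintype.ofFinite ι
  have hsum : (vertexCount B : (ι → E) → ℕ) =
      fun ω ↦ ∑ i, if i ∈ vertexIndices B ω then 1 else 0 := by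
    ext ω
    rw [vertexCount, Set.ncard_eq_toFinset_card', ← Finset.card_filter]
    congr 1
    ext i
    simp
  rw [hsum]
  exact Finset.measurable_sum _ fun i _ ↦ Measurable.ite
    (measurableSet_setOf_mem_vertexIndices hB i) measurable_const measurable_const

end MeasurableVertexCount

section Triangles

variable {A B C p : ℝ × ℝ}

/-- Twice the signed area of the triangle `p q r`, as an affine function of `r`: positive when `r`
lies to the left of the line from `p` to `q`. -/
def orient (p q : ℝ × ℝ) : (ℝ × ℝ) →ᵃ[ℝ] ℝ :=
  ((q.1 - p.1) • LinearMap.snd ℝ ℝ ℝ - (q.2 - p.2) • LinearMap.fst ℝ ℝ ℝ).toAffineMap +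
    AffineMap.const ℝ _ ((q.2 - p.2) * p.1 - (q.1 - p.1) * p.2)

theorem orient_apply (p q r : ℝ × ℝ) :
    orient p q r = (q.1 - p.1) * (r.2 - p.2) - (q.2 - p.2) * (r.1 - p.1) := by
  simp only [orient, AffineMap.coe_add, Pi.add_apply, LinearMap.coe_toAffineMap,
    LinearMap.sub_apply, LinearMap.smul_apply, LinearMap.snd_apply, LinearMap.fst_apply,
    smul_eq_mul, AffineMap.const_apply]
  ring

theorem orient_self_left (p q : ℝ × ℝ) : orient p q p = 0 := by simp [orient_apply]

theorem orient_self_right (p q : ℝ × ℝ) : orient p q q = 0 := by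
  rw [orient_apply]
  ring

theorem orient_swap (p q r : ℝ × ℝ) : orient q p r = -orient p q r := by
  simp only [orient_apply]
  ring

theorem orient_rotate (p q r : ℝ × ℝ) : orient q r p = orient p q r := by
  simp only [orient_apply]
  ring

/-- The open triangle with vertices `A`, `B`, `C` in counterclockwise order; it is empty when the
order is clockwise. -/
def openTriangle (A B C : ℝ × ℝ) : Set (ℝ × ℝ) :=
  {p | 0 < orient B C p ∧ 0 < orient C A p ∧ 0 < orient A B p}

theorem measurableSet_setOf_mem_openTriangle {α : Type*} [MeasurableSpace α]
    {a b c p : α → ℝ × ℝ} (ha : Measurable a) (hb : Measurable b) (hc : Measurable c)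
    (hp : Measurable p) : MeasurableSet {x | p x ∈ openTriangle (a x) (b x) (c x)} := by
  have hhalfPlane {q r : α → ℝ × ℝ} (hq : Measurable q) (hr : Measurable r) :
      MeasurableSet {x | 0 < orient (q x) (r x) (p x)} := by
    simp only [orient_apply]
    exact measurableSet_lt measurable_const (by fun_prop)
  exact (hhalfPlane hb hc).inter ((hhalfPlane hc ha).inter (hhalfPlane ha hb))

theorem measurableSet_openTriangle (A B C : ℝ × ℝ) : MeasurableSet (openTriangle A B C) :=
  measurableSet_setOf_mem_openTriangle measurable_const measurable_const measurable_const
    measurable_id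

theorem orient_add_orient_add_orient (A B C p : ℝ × ℝ) :
    orient B C p + orient C A p + orient A B p = orient A B C := by
  simp only [orient_apply]
  ring

theorem orient_smul_add_orient_smul_add_orient_smul (A B C p : ℝ × ℝ) :
    orient B C p • A + orient C A p • B + orient A B p • C = orient A B C • p := by
  ext <;> simp only [orient_apply, Prod.fst_add, Prod.snd_add, Prod.smul_fst, Prod.smul_snd,
    smul_eq_mul] <;> ring

theorem openTriangle_subset_convexHull : openTriangle A B C ⊆ convexHull ℝ {A, B, C} := by
  rintro p ⟨hA, hB, hC⟩
  have hsum := orient_add_orient_add_orient A B C p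
  have hpos : 0 < orient A B C := by linarith
  have hp : Finset.univ.centerMass ![orient B C p, orient C A p, orient A B p] ![A, B, C] = p := by
    simp [Finset.centerMass, Fin.sum_univ_three, hsum,
      orient_smul_add_orient_smul_add_orient_smul, inv_smul_smul₀ hpos.ne']
  rw [← hp]
  refine Finset.centerMass_mem_convexHull _ (fun i _ ↦ ?_) ?_ (fun i _ ↦ ?_)
  · fin_cases i
    exacts [hA.le, hB.le, hC.le]
  · simpa [Fin.sum_univ_three, hsum] using hpos
  · fin_cases i <;> simp

theorem orient_nonneg_of_mem_convexHull (h : 0 ≤ orient A B C) (hp : p ∈ convexHull ℝ {A, B, C}) :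
    0 ≤ orient B C p ∧ 0 ≤ orient C A p ∧ 0 ≤ orient A B p := by
  have hhalfPlane {q r : ℝ × ℝ} (hqr : ∀ x ∈ ({A, B, C} : Set (ℝ × ℝ)), 0 ≤ orient q r x) :
      0 ≤ orient q r p :=
    convexHull_min hqr ((convex_Ici 0).affine_preimage (orient q r)) hp
  have hA : 0 ≤ orient B C A := by rwa [orient_rotate]
  have hB : 0 ≤ orient C A B := by rwa [orient_rotate, orient_rotate]
  refine ⟨hhalfPlane ?_, hhalfPlane ?_, hhalfPlane ?_⟩ <;>
    simp [orient_self_left, orient_self_right, hA, hB, h]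

/-- The affine map sending `(0,0)`, `(1,0)`, `(0,1)` to `A`, `B`, `C`. -/
def triangleMap (A B C : ℝ × ℝ) : (ℝ × ℝ) →ᵃ[ℝ] ℝ × ℝ :=
  ((LinearMap.fst ℝ ℝ ℝ).smulRight (B - A) + (LinearMap.snd ℝ ℝ ℝ).smulRight (C - A)).toAffineMap +
    AffineMap.const ℝ _ A

theorem triangleMap_apply (A B C p : ℝ × ℝ) :
    triangleMap A B C p = p.1 • (B - A) + p.2 • (C - A) + A := by
  simp [triangleMap]

theorem orient_triangleMap (A B C p q r : ℝ × ℝ) :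
    orient (triangleMap A B C p) (triangleMap A B C q) (triangleMap A B C r) =
      orient A B C * orient p q r := by
  simp only [orient_apply, triangleMap_apply, Prod.fst_add, Prod.snd_add, Prod.smul_fst,
    Prod.smul_snd, Prod.fst_sub, Prod.snd_sub, smul_eq_mul]
  ring

theorem det_linear_triangleMap (A B C : ℝ × ℝ) :
    LinearMap.det (triangleMap A B C).linear = orient A B C := by
  have hmatrix : LinearMap.toMatrix (.finTwoProd ℝ) (.finTwoProd ℝ) (triangleMap A B C).linear =
      !![B.1 - A.1, C.1 - A.1; B.2 - A.2, C.2 - A.2] := by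
    ext i j
    fin_cases i <;> fin_cases j <;> simp [LinearMap.toMatrix_apply, triangleMap]
  rw [← LinearMap.det_toMatrix (.finTwoProd ℝ), hmatrix, Matrix.det_fin_two_of, orient_apply]
  ring

/-- The interior of the triangle `T`. -/
def openT : Set (ℝ × ℝ) := openTriangle (0, 0) (1, 0) (0, 1)

theorem mem_openT : p ∈ openT ↔ p.1 + p.2 < 1 ∧ 0 < p.1 ∧ 0 < p.2 := by
  simp only [openT, openTriangle, Set.mem_ofPred_eq, orient_apply]
  constructor <;> rintro ⟨h₁, h₂, h₃⟩ <;> exact ⟨by linarith, by linarith, by linarith⟩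

theorem triangleMap_preimage_openTriangle (h : 0 < orient A B C) :
    triangleMap A B C ⁻¹' openTriangle A B C = openT := by
  have hA : triangleMap A B C (0, 0) = A := by simp [triangleMap_apply]
  have hB : triangleMap A B C (1, 0) = B := by simp [triangleMap_apply]
  have hC : triangleMap A B C (0, 1) = C := by simp [triangleMap_apply]
  ext p
  have hiff (q r : ℝ × ℝ) : 0 < orient (triangleMap A B C q) (triangleMap A B C r)
      (triangleMap A B C p) ↔ 0 < orient q r p := by
    rw [orient_triangleMap, mul_pos_iff_of_pos_left h]
  rw [openT, openTriangle, openTriangle, Set.mem_preimage, Set.mem_ofPred_eq, Set.mem_ofPred_eq,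
    ← hiff, ← hiff, ← hiff, hA, hB, hC]

end Triangles

section NearFar

variable {a b v p : ℝ × ℝ}

theorem orient_smul_add_smul (a b v p : ℝ × ℝ) :
    orient v b p • a + orient a b v • p = orient a b p • v + orient v a p • b := by
  ext <;> simp only [orient_apply, Prod.fst_add, Prod.snd_add, Prod.smul_fst, Prod.smul_snd,
    smul_eq_mul] <;> ring

theorem exists_mem_segment_wbtw (ha : 0 ≤ orient v b p) (hp : 0 < orient a b v)
    (hv : 0 ≤ orient a b p) (hb : 0 ≤ orient v a p) : ∃ y ∈ segment ℝ v b, Wbtw ℝ a y p := by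
  set s := orient v b p + orient a b v with hs
  have hs_pos : 0 < s := by linarith
  have hs' : orient a b p + orient v a p = s := by
    simp only [hs, orient_apply]
    ring
  refine ⟨s⁻¹ • (orient a b p • v + orient v a p • b), ?_, ?_⟩
  · refine ⟨s⁻¹ * orient a b p, s⁻¹ * orient v a p, by positivity, by positivity, ?_, ?_⟩
    · rw [← mul_add, hs', inv_mul_cancel₀ hs_pos.ne']
    · rw [smul_add, smul_smul, smul_smul]
  · rw [← mem_segment_iff_wbtw, ← orient_smul_add_smul]
    refine ⟨s⁻¹ * orient v b p, s⁻¹ * orient a b v, by positivity, by positivity, ?_, ?_⟩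
    · rw [← mul_add, inv_mul_cancel₀ hs_pos.ne']
    · rw [smul_add, smul_smul, smul_smul]

/-- The open triangle with vertices `(1,0)`, `(0,1)` and `v`. Its points cannot be vertices of the
hull of `v`, the two corners and any further points. -/
def nearTriangle (v : ℝ × ℝ) : Set (ℝ × ℝ) := openTriangle (1, 0) (0, 1) v

/-- The point in which the line through `(1,0)` and `v` leaves `T`. -/
def edgePoint (v : ℝ × ℝ) : ℝ × ℝ := (0, v.2 / (1 - v.1))

/-- The part of `T` that is cut off from `(1,0)` by the segment from `v` to `(0,1)` and lies above
the line through `(1,0)` and `v`. -/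
def farTriangle (v : ℝ × ℝ) : Set (ℝ × ℝ) := openTriangle (edgePoint v) v (0, 1)

theorem orient_corners_eq (v : ℝ × ℝ) : orient (1, 0) (0, 1) v = 1 - v.1 - v.2 := by
  rw [orient_apply]
  ring

theorem orient_edgePoint_eq (hv : v.1 < 1) :
    orient (edgePoint v) v (0, 1) = v.1 * (1 - v.1 - v.2) / (1 - v.1) := by
  have : 1 - v.1 ≠ 0 := by linarith
  simp only [orient_apply, edgePoint]
  field_simp
  ring

theorem orient_corner_eq_orient_edgePoint (hv : v.1 < 1) (p : ℝ × ℝ) :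
    v.1 * orient v (1, 0) p = (1 - v.1) * orient (edgePoint v) v p := by
  have : 1 - v.1 ≠ 0 := by linarith
  simp only [orient_apply, edgePoint]
  field_simp
  ring

theorem edgePoint_mem_T (hv : v ∈ openT) : edgePoint v ∈ T := by
  obtain ⟨hsum, h₁, h₂⟩ := mem_openT.1 hv
  have h : v.2 / (1 - v.1) ∈ Set.Icc 0 1 := ⟨by bound, (div_le_one (by linarith)).2 (by linarith)⟩
  have hseg : edgePoint v ∈ segment ℝ (0, 0) ((0, 1) : ℝ × ℝ) :=
    ⟨1 - v.2 / (1 - v.1), v.2 / (1 - v.1), by linarith [h.2], h.1, by ring, by simp [edgePoint]⟩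
  exact segment_subset_convexHull (by simp) (by simp) hseg

theorem openT_subset_T : openT ⊆ T := openTriangle_subset_convexHull

theorem orient_pos_of_mem_nearTriangle (hp : p ∈ nearTriangle v) : 0 < orient v (1, 0) p := hp.2.1

theorem orient_pos_of_mem_farTriangle (hv : v ∈ openT) (hp : p ∈ farTriangle v) :
    0 < orient v (1, 0) p := by
  obtain ⟨hsum, h₁, h₂⟩ := mem_openT.1 hv
  have hpos : 0 < (1 - v.1) * orient (edgePoint v) v p := mul_pos (by linarith) hp.2.2
  rw [← orient_corner_eq_orient_edgePoint (by linarith)] at hpos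
  exact pos_of_mul_pos_right hpos h₁.le

theorem disjoint_farTriangle_nearTriangle (v : ℝ × ℝ) :
    Disjoint (farTriangle v) (nearTriangle v) := by
  refine Set.disjoint_left.2 fun p hfar hnear ↦ ?_
  have h := orient_swap v (0, 1) p
  linarith [hfar.1, hnear.1]

theorem mem_farTriangle_or_mem_nearTriangle (hv : v ∈ openT) (hp : p ∈ openT)
    (hpos : 0 < orient v (1, 0) p) (hne : orient v (0, 1) p ≠ 0) :
    p ∈ farTriangle v ∨ p ∈ nearTriangle v := by
  obtain ⟨hvsum, hv₁, hv₂⟩ := mem_openT.1 hv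
  obtain ⟨hpsum, hp₁, -⟩ := mem_openT.1 hp
  rcases hne.lt_or_gt with hneg | hpos'
  · refine .inr ⟨?_, hpos, ?_⟩
    · rw [orient_swap]
      linarith
    · rw [orient_corners_eq]
      linarith
  · refine .inl ⟨hpos', ?_, ?_⟩
    · have hlt : v.2 / (1 - v.1) < 1 := (div_lt_one (by linarith)).2 (by linarith)
      simp only [orient_apply, edgePoint]
      nlinarith
    · have h : 0 < (1 - v.1) * orient (edgePoint v) v p := by
        rw [← orient_corner_eq_orient_edgePoint (by linarith)]
        positivity
      exact pos_of_mul_pos_right h (by linarith)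

theorem nearTriangle_subset_convexHull (v : ℝ × ℝ) :
    nearTriangle v ⊆ convexHull ℝ {(1, 0), v, (0, 1)} := by
  rw [Set.pair_comm]
  exact openTriangle_subset_convexHull

theorem openTriangle_subset_T {A B C : ℝ × ℝ} (hA : A ∈ T) (hB : B ∈ T) (hC : C ∈ T) :
    openTriangle A B C ⊆ T :=
  openTriangle_subset_convexHull.trans
    (convexHull_min (by simp [Set.insert_subset_iff, hA, hB, hC]) (convex_convexHull ℝ _))

theorem one_zero_mem_T : ((1, 0) : ℝ × ℝ) ∈ T := subset_convexHull ℝ _ (by simp)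

theorem zero_one_mem_T : ((0, 1) : ℝ × ℝ) ∈ T := subset_convexHull ℝ _ (by simp)

theorem exists_mem_segment_wbtw_of_mem_farTriangle (hv : v ∈ openT) (hp : p ∈ farTriangle v) :
    ∃ y ∈ segment ℝ v (0, 1), Wbtw ℝ (1, 0) y p := by
  have hpT : p ∈ T := openTriangle_subset_T (edgePoint_mem_T hv) (openT_subset_T hv)
    zero_one_mem_T hp
  have hle : 0 ≤ orient (1, 0) (0, 1) p :=
    (orient_nonneg_of_mem_convexHull (by simp [orient_apply]) hpT).1
  exact exists_mem_segment_wbtw hp.1.le hv.1 hle (orient_pos_of_mem_farTriangle hv hp).le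

end NearFar

section FirstVertex

variable {ι : Type*} {n : ℕ} {v : ℝ × ℝ}

/-- The families of points that lie in the far triangle of `v` for indices in `I` and in its near
triangle for all other indices. -/
def farNearSet (v : ℝ × ℝ) (I : Finset ι) : Set (ι → ℝ × ℝ) :=
  {η | (∀ i ∈ I, η i ∈ farTriangle v) ∧ ∀ i ∉ I, η i ∈ nearTriangle v}

theorem orient_pos_of_mem_farNearSet {I : Finset ι} {η : ι → ℝ × ℝ} (hv : v ∈ openT)
    (hη : η ∈ farNearSet v I) (i : ι) : 0 < orient v (1, 0) (η i) := by
  by_cases hi : i ∈ I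
  · exact orient_pos_of_mem_farTriangle hv (hη.1 i hi)
  · exact orient_pos_of_mem_nearTriangle (hη.2 i hi)

theorem eq_of_mem_farNearSet {I J : Finset ι} {η : ι → ℝ × ℝ} (hI : η ∈ farNearSet v I)
    (hJ : η ∈ farNearSet v J) : I = J := by
  have hdisj (i : ι) : ¬(η i ∈ farTriangle v ∧ η i ∈ nearTriangle v) := fun h ↦
    Set.disjoint_left.1 (disjoint_farTriangle_nearTriangle v) h.1 h.2
  ext i
  exact ⟨fun hi ↦ by_contra fun hi' ↦ hdisj i ⟨hI.1 i hi, hJ.2 i hi'⟩,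
    fun hi ↦ by_contra fun hi' ↦ hdisj i ⟨hJ.1 i hi, hI.2 i hi'⟩⟩

theorem mem_vertexIndices_of_forall_orient_pos {ω : ι → ℝ × ℝ} {i₀ : ι} (hv : ω i₀ ∈ openT)
    (h : ∀ i ≠ i₀, 0 < orient (ω i₀) (1, 0) (ω i)) : i₀ ∈ vertexIndices {(1, 0), (0, 1)} ω := by
  obtain ⟨hsum, -, h₂⟩ := mem_openT.1 hv
  intro hmem
  rw [Set.union_insert] at hmem
  have heq : ω i₀ = (1, 0) := by
    refine eq_of_mem_convexHull_insert (orient (ω i₀) (1, 0)) ?_ ?_ hmem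
    · rw [orient_self_right]
      rintro _ (⟨i, hi, rfl⟩ | rfl)
      · exact h i hi
      · rw [orient_apply]
        linarith
    · rw [orient_self_left, orient_self_right]
  rw [heq] at h₂
  exact h₂.false

theorem vertexCount_insertNth_eq_add_one {i : Fin (n + 1)} {I : Finset (Fin n)}
    {η : Fin n → ℝ × ℝ} (hv : v ∈ openT) (hη : η ∈ farNearSet v I) :
    vertexCount {(1, 0), (0, 1)} (i.insertNth v η : Fin (n + 1) → ℝ × ℝ) =
      vertexCount {v, (0, 1)} (fun j : I ↦ η j) + 1 := by
  set ω : Fin (n + 1) → ℝ × ℝ := i.insertNth v η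
  have hωi : ω i = v := by simp [ω]
  have hωs (j : Fin n) : ω (i.succAbove j) = η j := by simp [ω]
  have hi : i ∈ vertexIndices {(1, 0), (0, 1)} ω := by
    refine mem_vertexIndices_of_forall_orient_pos (by rwa [hωi]) fun l hl ↦ ?_
    obtain ⟨j, rfl⟩ := Fin.exists_succAbove_eq hl
    rw [hωi, hωs]
    exact orient_pos_of_mem_farNearSet hv hη j
  have hs : Function.Injective fun j : I ↦ i.succAbove j :=
    Fin.succAbove_right_injective.comp Subtype.val_injective
  have his : i ∉ Set.range fun j : I ↦ i.succAbove j := by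
    rintro ⟨j, hj⟩
    exact Fin.succAbove_ne i j hj
  rw [vertexCount_eq_add_one hs his hi]
  · simp only [Function.comp_def, hωi, hωs]
  · intro l hl hli
    obtain ⟨j, rfl⟩ := Fin.exists_succAbove_eq hli
    rw [hωi, hωs]
    exact nearTriangle_subset_convexHull v (hη.2 j fun hj ↦ hl ⟨⟨j, hj⟩, rfl⟩)
  · intro j
    rw [hωi, hωs]
    exact exists_mem_segment_wbtw_of_mem_farTriangle hv (hη.1 j j.2)

end FirstVertex

section MeasureLemmas

theorem setLIntegral_prod_eq_lintegral_setLIntegral {α β : Type*} [MeasurableSpace α]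
    [MeasurableSpace β] (μ : Measure α) (ν : Measure β) [SFinite ν] {s : Set (α × β)}
    (hs : MeasurableSet s) {f : α × β → ENNReal} (hf : Measurable f) :
    ∫⁻ z in s, f z ∂μ.prod ν = ∫⁻ x, ∫⁻ y in Prod.mk x ⁻¹' s, f (x, y) ∂ν ∂μ := by
  rw [← lintegral_indicator hs, lintegral_prod _ (hf.indicator hs).aemeasurable]
  refine lintegral_congr fun x ↦ ?_
  rw [← lintegral_indicator (measurable_prodMk_left hs)]
  rfl

theorem pi_const_smul {ι α : Type*} [Fintype ι] [MeasurableSpace α] (d : NNReal) (ν : Measure α)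
    [IsFiniteMeasure ν] :
    Measure.pi (fun _ : ι ↦ d • ν) = d ^ Fintype.card ι • Measure.pi fun _ ↦ ν := by
  refine Measure.pi_eq fun s _ ↦ ?_
  simp only [Measure.smul_apply, Measure.pi_pi, ENNReal.smul_def, smul_eq_mul,
    Finset.prod_mul_distrib, Finset.prod_const, Finset.card_univ, ENNReal.coe_pow]

theorem measure_eq_sum_measure_inter {α κ : Type*} [MeasurableSpace α] [Fintype κ] {μ : Measure α}
    {s : κ → Set α} {E : Set α} (hs : ∀ i, MeasurableSet (s i))
    (hdisj : Pairwise (Function.onFun Disjoint s)) (hcover : ∀ᵐ x ∂μ, ∃ i, x ∈ s i)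
    (hE : MeasurableSet E) : μ E = ∑ i, μ (s i ∩ E) := by
  have hunion : (⋃ i, s i) =ᵐ[μ] Set.univ := by
    filter_upwards [hcover] with x hx
    exact eq_true (Set.mem_iUnion.2 hx)
  have h := Measure.restrict_iUnion_apply hdisj hs hE (μ := μ)
  rw [Measure.restrict_congr_set hunion, Measure.restrict_univ, tsum_fintype] at h
  simpa only [Measure.restrict_apply hE, Set.inter_comm E] using h

end MeasureLemmas

section AffineMeasure

variable {E : Type*} [NormedAddCommGroup E] [NormedSpace ℝ E] [MeasurableSpace E] [BorelSpace E]
  [FiniteDimensional ℝ E] (μ : Measure E) [μ.IsAddHaarMeasure]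

theorem addHaar_setOf_affineMap_eq {f : E →ᵃ[ℝ] ℝ} {t : ℝ} (hf : ∃ x, f x ≠ t) :
    μ {x | f x = t} = 0 := by
  obtain ⟨x, hx⟩ := hf
  have hset : {x | f x = t} = ((affineSpan ℝ {t}).comap f : Set E) := by
    ext y
    simp
  rw [hset]
  refine Measure.addHaar_affineSubspace μ _ fun htop ↦ hx ?_
  have hmem : x ∈ (affineSpan ℝ {t}).comap f := htop ▸ AffineSubspace.mem_top ℝ E x
  simpa using hmem

theorem map_affineMap_addHaar_eq_smul_addHaar {φ : E →ᵃ[ℝ] E} (hφ : LinearMap.det φ.linear ≠ 0) :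
    μ.map φ = ENNReal.ofReal |(LinearMap.det φ.linear)⁻¹| • μ := by
  have hdecomp : (φ : E → E) = (· + φ 0) ∘ φ.linear := AffineMap.decomp φ
  rw [hdecomp, ← Measure.map_map (measurable_add_const _)
    φ.linear.continuous_of_finiteDimensional.measurable,
    Measure.map_linearMap_addHaar_eq_smul_addHaar μ hφ, Measure.map_smul,
    map_add_right_eq_self]

end AffineMeasure

section UniformMeasure

variable {A B C : ℝ × ℝ}

theorem volume_setOf_orient_eq_zero (h : A ≠ B) : volume {p | orient A B p = 0} = 0 := by
  refine addHaar_setOf_affineMap_eq volume ?_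
  by_contra! hzero
  have h₁ := hzero (A + (0, 1))
  have h₂ := hzero (A + (1, 0))
  rw [orient_apply] at h₁ h₂
  refine h (Prod.ext ?_ ?_)
  · simp at h₁
    linarith
  · simp at h₂
    linarith

theorem openT_ae_eq_T : openT =ᵐ[volume] T := by
  have hline {p q : ℝ × ℝ} (hpq : p ≠ q) : ∀ᵐ r, orient p q r ≠ 0 :=
    measure_eq_zero_iff_ae_notMem.1 (volume_setOf_orient_eq_zero hpq)
  refine openT_subset_T.eventuallyLE.antisymm ?_
  filter_upwards [hline (p := (1, 0)) (q := (0, 1)) (by simp),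
    hline (p := (0, 1)) (q := (0, 0)) (by simp),
    hline (p := (0, 0)) (q := (1, 0)) (by simp)] with p h₁ h₂ h₃ hp
  obtain ⟨h₁', h₂', h₃'⟩ := orient_nonneg_of_mem_convexHull (by simp [orient_apply]) hp
  exact ⟨h₁'.lt_of_ne' h₁, h₂'.lt_of_ne' h₂, h₃'.lt_of_ne' h₃⟩

theorem μT_eq_smul_restrict_openT : μT = (2 : ENNReal) • volume.restrict openT := by
  rw [μT, Measure.restrict_congr_set openT_ae_eq_T]

theorem measurableSet_openT : MeasurableSet openT := measurableSet_openTriangle _ _ _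

theorem measurable_triangleMap (A B C : ℝ × ℝ) : Measurable (triangleMap A B C) :=
  (triangleMap A B C).continuous_of_finiteDimensional.measurable

theorem triangleMap_injective (h : orient A B C ≠ 0) :
    Function.Injective (triangleMap A B C) := by
  rw [← det_linear_triangleMap] at h
  rw [← AffineMap.linear_injective_iff]
  exact (LinearMap.equivOfDetNeZero _ h).injective

theorem μT_restrict_openTriangle (hA : A ∈ T) (hB : B ∈ T) (hC : C ∈ T)
    (h : 0 < orient A B C) :
    μT.restrict (openTriangle A B C) =
      ENNReal.ofReal (orient A B C) • μT.map (triangleMap A B C) := by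
  have hmap : (volume.restrict openT).map (triangleMap A B C) =
      ENNReal.ofReal (orient A B C)⁻¹ • volume.restrict (openTriangle A B C) := by
    rw [← triangleMap_preimage_openTriangle h,
      ← Measure.restrict_map (measurable_triangleMap A B C) (measurableSet_openTriangle A B C),
      map_affineMap_addHaar_eq_smul_addHaar volume (by rw [det_linear_triangleMap]; exact h.ne'),
      Measure.restrict_smul, det_linear_triangleMap, abs_of_pos (inv_pos.2 h)]
  have hmul : ENNReal.ofReal (orient A B C) * ENNReal.ofReal (orient A B C)⁻¹ = 1 := by
    rw [← ENNReal.ofReal_mul h.le, mul_inv_cancel₀ h.ne', ENNReal.ofReal_one]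
  calc μT.restrict (openTriangle A B C)
    _ = (2 : ENNReal) • volume.restrict (openTriangle A B C) := by
      rw [μT, Measure.restrict_smul, Measure.restrict_restrict_of_subset
        (openTriangle_subset_T hA hB hC)]
    _ = ENNReal.ofReal (orient A B C) • μT.map (triangleMap A B C) := by
      rw [μT_eq_smul_restrict_openT, Measure.map_smul, hmap, smul_comm (2 : ENNReal), smul_smul,
        hmul, one_smul]

end UniformMeasure

section Integrals

theorem setLIntegral_openT {f : ℝ × ℝ → ENNReal} (hf : Measurable f) :
    ∫⁻ p in openT, f p = ∫⁻ x in Set.Ioo 0 1, ∫⁻ y in Set.Ioo 0 (1 - x), f (x, y) := by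
  rw [Measure.volume_eq_prod, setLIntegral_prod_eq_lintegral_setLIntegral _ _
    measurableSet_openT hf, ← lintegral_indicator measurableSet_Ioo]
  refine lintegral_congr fun x ↦ ?_
  by_cases hx : x ∈ Set.Ioo (0 : ℝ) 1
  · rw [Set.indicator_of_mem hx]
    congr 2
    ext y
    rw [Set.mem_preimage, mem_openT, Set.mem_Ioo, lt_sub_iff_add_lt']
    exact ⟨fun h ↦ ⟨h.2.2, h.1⟩, fun h ↦ ⟨h.2, hx.1, h.1⟩⟩
  · have hempty : Prod.mk x ⁻¹' openT = ∅ := by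
      refine Set.eq_empty_of_forall_notMem fun y hy ↦ hx ?_
      obtain ⟨hsum, h₁, h₂⟩ := mem_openT.1 hy
      exact ⟨h₁, by linarith⟩
    rw [Set.indicator_of_notMem hx, hempty, setLIntegral_empty]

theorem setLIntegral_Ioo_ofReal {a b : ℝ} (hab : a ≤ b) {f : ℝ → ℝ}
    (hf : ContinuousOn f (Set.Icc a b)) (hpos : ∀ x ∈ Set.Ioo a b, 0 ≤ f x) :
    ∫⁻ x in Set.Ioo a b, ENNReal.ofReal (f x) = ENNReal.ofReal (∫ x in a..b, f x) := by
  rw [intervalIntegral.integral_of_le hab, integral_Ioc_eq_integral_Ioo,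
    ofReal_integral_eq_lintegral_ofReal]
  · exact hf.integrableOn_Icc.mono_set Set.Ioo_subset_Icc_self
  · exact (ae_restrict_iff' measurableSet_Ioo).2 (.of_forall hpos)

open Nat in
theorem integral_pow_mul_one_sub_pow (m r : ℕ) :
    ∫ x in (0 : ℝ)..1, x ^ m * (1 - x) ^ r = m ! * r ! / (m + r + 1)! := by
  have hre (j : ℕ) : 0 < ((j : ℂ) + 1).re := by
    simp only [Complex.add_re, Complex.natCast_re, Complex.one_re]
    positivity
  have h := Complex.betaIntegral_eq_Gamma_mul_div (m + 1) (r + 1) (hre m) (hre r)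
  have hsum : (m + 1 + (r + 1) : ℂ) = ((m + r + 1 : ℕ) : ℂ) + 1 := by
    push_cast
    ring
  simp only [Complex.betaIntegral, add_sub_cancel_right, Complex.cpow_natCast, hsum,
    Complex.Gamma_nat_eq_factorial] at h
  rw [← Complex.ofReal_inj, ← intervalIntegral.integral_ofReal]
  push_cast
  exact h

theorem integral_far_mul_near {x : ℝ} (hx : x < 1) (m r : ℕ) :
    ∫ y in (0 : ℝ)..(1 - x), (x * (1 - x - y) / (1 - x)) ^ m * (1 - x - y) ^ r =
      x ^ m * (1 - x) ^ (r + 1) / (m + r + 1) := by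
  have hpow (y : ℝ) : (x * (1 - x - y) / (1 - x)) ^ m * (1 - x - y) ^ r =
      (x / (1 - x)) ^ m * (1 - x - y) ^ (m + r) := by
    rw [mul_div_right_comm, mul_pow]
    ring
  have hne : 1 - x ≠ 0 := by linarith
  simp only [hpow]
  rw [intervalIntegral.integral_const_mul,
    intervalIntegral.integral_comp_sub_left (fun s ↦ s ^ (m + r)), integral_pow]
  rw [div_pow, sub_self, sub_zero, pow_succ, pow_add, zero_pow (by lia)]
  push_cast
  field_simp
  ring

open Nat in
theorem lintegral_far_mul_near (m r : ℕ) :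
    ∫⁻ v, ENNReal.ofReal ((v.1 * (1 - v.1 - v.2) / (1 - v.1)) ^ m * (1 - v.1 - v.2) ^ r) ∂μT =
      ENNReal.ofReal (2 * (m ! * (r + 1)! / (m + r + 2)! / (m + r + 1))) := by
  have hinner : ∀ x ∈ Set.Ioo (0 : ℝ) 1, ∫⁻ y in Set.Ioo 0 (1 - x),
      ENNReal.ofReal ((x * (1 - x - y) / (1 - x)) ^ m * (1 - x - y) ^ r) =
        ENNReal.ofReal (x ^ m * (1 - x) ^ (r + 1) / (m + r + 1)) := by
    rintro x ⟨hx₀, hx₁⟩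
    rw [setLIntegral_Ioo_ofReal (by linarith) (by fun_prop), integral_far_mul_near hx₁]
    rintro y ⟨-, hy⟩
    bound
  rw [μT_eq_smul_restrict_openT, lintegral_smul_measure, setLIntegral_openT (by fun_prop),
    setLIntegral_congr_fun measurableSet_Ioo hinner,
    setLIntegral_Ioo_ofReal zero_le_one (by fun_prop), intervalIntegral.integral_div,
    integral_pow_mul_one_sub_pow, smul_eq_mul, ENNReal.ofReal_mul zero_le_two,
    ENNReal.ofReal_ofNat]
  · rfl
  · rintro x ⟨hx₀, hx₁⟩
    bound

open Nat in
theorem farCountProb_eq {n m : ℕ} (hm : m ≤ n) :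
    farCountProb n m = (n + 1) * n.choose m *
      (2 * (m ! * (n - m + 1)! / (n + 2)! / (n + 1))) := by
  obtain ⟨r, rfl⟩ := Nat.exists_eq_add_of_le hm
  have hchoose : ((m + r).choose m : ℝ) * m ! * r ! = (m + r)! := by
    have h := Nat.choose_mul_factorial_mul_factorial hm
    rw [add_tsub_cancel_left] at h
    exact_mod_cast h
  have hfactorial : ((m + r)! : ℝ) ≠ 0 := by positivity
  rw [add_tsub_cancel_left, Nat.factorial_succ r, Nat.factorial_succ (m + r + 1),
    Nat.factorial_succ (m + r), farCountProb]
  push_cast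
  field_simp
  linear_combination (-(r + 1) * (m + r + 2) : ℝ) * hchoose

theorem ae_mem_openT : ∀ᵐ p ∂μT, p ∈ openT := by
  rw [μT_eq_smul_restrict_openT]
  exact Measure.ae_smul_measure (ae_restrict_mem measurableSet_openT) _

theorem mul_lintegral_orient_pow_mul_orient_pow {n m : ℕ} (hm : m ≤ n) :
    (n + 1) * n.choose m * ∫⁻ v, ENNReal.ofReal (orient (edgePoint v) v (0, 1)) ^ m *
      ENNReal.ofReal (orient (1, 0) (0, 1) v) ^ (n - m) ∂μT =
        ENNReal.ofReal (farCountProb n m) := by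
  have hcongr : ∀ᵐ v ∂μT, ENNReal.ofReal (orient (edgePoint v) v (0, 1)) ^ m *
      ENNReal.ofReal (orient (1, 0) (0, 1) v) ^ (n - m) =
        ENNReal.ofReal ((v.1 * (1 - v.1 - v.2) / (1 - v.1)) ^ m *
          (1 - v.1 - v.2) ^ (n - m)) := by
    filter_upwards [ae_mem_openT] with v hv
    obtain ⟨hsum, h₁, h₂⟩ := mem_openT.1 hv
    have hnear : 0 ≤ 1 - v.1 - v.2 := by linarith
    have hfar : 0 ≤ v.1 * (1 - v.1 - v.2) / (1 - v.1) := by bound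
    rw [orient_edgePoint_eq (by linarith), orient_corners_eq, ENNReal.ofReal_mul (by positivity),
      ENNReal.ofReal_pow hfar, ENNReal.ofReal_pow hnear]
  have hcast : (m : ℝ) + (n - m : ℕ) = n := by exact_mod_cast Nat.add_sub_cancel' hm
  have hconst : (n + 1 : ENNReal) * n.choose m = ENNReal.ofReal ((n + 1) * n.choose m) :=
    mod_cast (ENNReal.ofReal_natCast ((n + 1) * n.choose m)).symm
  rw [lintegral_congr_ae hcongr, lintegral_far_mul_near, hcast, Nat.add_sub_cancel' hm, hconst,
    ← ENNReal.ofReal_mul (by positivity), farCountProb_eq hm]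

instance : IsProbabilityMeasure μT where
  measure_univ := by simpa using lintegral_far_mul_near 0 0

instance (n : ℕ) : IsProbabilityMeasure (P n) := by
  rw [P]
  infer_instance

end Integrals

section VertexProb

variable {ι : Type*} [Fintype ι] {n : ℕ}

/-- The probability that the chain of `n` uniform points in `T` has `k` vertices besides the
corners. -/
def vertexProb (n k : ℕ) : ENNReal := P n {ω | vertexCount {(1, 0), (0, 1)} ω = k}

theorem measurableSet_vertexCount_eq {κ : Type*} [Finite κ] (p q : ℝ × ℝ) (k : ℕ) :
    MeasurableSet {η : κ → ℝ × ℝ | vertexCount {p, q} η = k} :=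
  measurable_vertexCount (Set.toFinite _) (measurableSet_singleton k)

theorem pi_μT_vertexCount_eq (k : ℕ) :
    Measure.pi (fun _ : ι ↦ μT) {η | vertexCount {(1, 0), (0, 1)} η = k} =
      vertexProb (Fintype.card ι) k := by
  let e := Fintype.equivFin ι
  have h := measurePreserving_piCongrLeft (fun _ : Fin (Fintype.card ι) ↦ μT) e
  rw [vertexProb, P, ← h.measure_preimage_equiv]
  congr 1
  ext η
  have hη : MeasurableEquiv.piCongrLeft (fun _ ↦ ℝ × ℝ) e η ∘ e = η :=
    funext fun i ↦ MeasurableEquiv.piCongrLeft_apply_apply (β := fun _ ↦ ℝ × ℝ) e η i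
  rw [Set.mem_preimage, Set.mem_ofPred_eq, Set.mem_ofPred_eq, ← vertexCount_comp_equiv e, hη]

theorem pi_μT_openTriangle {A B C : ℝ × ℝ} (hA : A ∈ T) (hB : B ∈ T) (hC : C ∈ T)
    (h : 0 < orient A B C) (k : ℕ) :
    Measure.pi (fun _ : ι ↦ μT) {η | (∀ i, η i ∈ openTriangle A B C) ∧ vertexCount {B, C} η = k} =
      ENNReal.ofReal (orient A B C) ^ Fintype.card ι * vertexProb (Fintype.card ι) k := by
  have hφ := measurable_triangleMap A B C
  have hmap : Measure.pi (fun _ : ι ↦ μT.map (triangleMap A B C)) =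
      (Measure.pi fun _ ↦ μT).map fun η i ↦ triangleMap A B C (η i) :=
    (Measure.pi_map_pi fun _ ↦ hφ.aemeasurable).symm
  have hpre : (fun η i ↦ triangleMap A B C (η i)) ⁻¹' {η : ι → ℝ × ℝ | vertexCount {B, C} η = k} =
      {η | vertexCount {(1, 0), (0, 1)} η = k} := by
    have himage : {B, C} = triangleMap A B C '' {(1, 0), (0, 1)} := by
      simp [Set.image_pair, triangleMap_apply]
    ext η
    rw [Set.mem_preimage, Set.mem_ofPred_eq, Set.mem_ofPred_eq,
      ← vertexCount_image_affineMap (triangleMap_injective h.ne') {(1, 0), (0, 1)}, ← himage]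
    rfl
  have hset : {η : ι → ℝ × ℝ | (∀ i, η i ∈ openTriangle A B C) ∧ vertexCount {B, C} η = k} =
      {η | vertexCount {B, C} η = k} ∩ Set.univ.pi fun _ ↦ openTriangle A B C := by
    ext η
    simp [and_comm]
  have hscale : μT.restrict (openTriangle A B C) =
      (orient A B C).toNNReal • μT.map (triangleMap A B C) := μT_restrict_openTriangle hA hB hC h
  have hmeas := measurableSet_vertexCount_eq (κ := ι) B C k
  rw [hset, ← Measure.restrict_apply hmeas, Measure.restrict_pi_pi, hscale, pi_const_smul,
    Measure.smul_apply, hmap, Measure.map_apply (by fun_prop) hmeas, hpre, pi_μT_vertexCount_eq]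
  rfl

theorem μT_openTriangle {A B C : ℝ × ℝ} (hA : A ∈ T) (hB : B ∈ T) (hC : C ∈ T)
    (h : 0 < orient A B C) : μT (openTriangle A B C) = ENNReal.ofReal (orient A B C) := by
  rw [← Measure.restrict_apply_univ, μT_restrict_openTriangle hA hB hC h, Measure.smul_apply,
    Measure.map_apply (measurable_triangleMap A B C) .univ, Set.preimage_univ, measure_univ,
    smul_eq_mul, mul_one]

theorem orient_edgePoint_pos {v : ℝ × ℝ} (hv : v ∈ openT) : 0 < orient (edgePoint v) v (0, 1) := by
  obtain ⟨hsum, h₁, h₂⟩ := mem_openT.1 hv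
  rw [orient_edgePoint_eq (by linarith)]
  exact div_pos (mul_pos h₁ (by linarith)) (by linarith)

theorem pi_μT_farNearSet {v : ℝ × ℝ} (hv : v ∈ openT) (I : Finset ι) (k : ℕ) :
    Measure.pi (fun _ : ι ↦ μT)
        {η | η ∈ farNearSet v I ∧ vertexCount {v, (0, 1)} (fun i : I ↦ η i) = k} =
      ENNReal.ofReal (orient (edgePoint v) v (0, 1)) ^ I.card *
        ENNReal.ofReal (orient (1, 0) (0, 1) v) ^ (Fintype.card ι - I.card) *
          vertexProb I.card k := by
  classical
  have hvT := openT_subset_T hv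
  let S : Set ({i // i ∈ I} → ℝ × ℝ) :=
    {η | (∀ i, η i ∈ farTriangle v) ∧ vertexCount {v, (0, 1)} η = k}
  let near : Set ({i // i ∉ I} → ℝ × ℝ) := Set.univ.pi fun _ ↦ nearTriangle v
  have hsplit : {η | η ∈ farNearSet v I ∧ vertexCount {v, (0, 1)} (fun i : I ↦ η i) = k} =
      MeasurableEquiv.piEquivPiSubtypeProd (fun _ ↦ ℝ × ℝ) (· ∈ I) ⁻¹' S ×ˢ near := by
    ext η
    simp only [S, near, farNearSet, Set.mem_preimage, Set.mem_prod, Set.mem_ofPred_eq,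
      Set.mem_univ_pi, Subtype.forall]
    exact and_right_comm
  have hfar (_ : Fintype I) : Measure.pi (fun _ ↦ μT) S =
      ENNReal.ofReal (orient (edgePoint v) v (0, 1)) ^ I.card * vertexProb I.card k := by
    rw [← Fintype.card_of_subtype I fun _ ↦ Iff.rfl]
    exact pi_μT_openTriangle (edgePoint_mem_T hv) hvT zero_one_mem_T (orient_edgePoint_pos hv) k
  have hnear : Measure.pi (fun _ ↦ μT) near =
      ENNReal.ofReal (orient (1, 0) (0, 1) v) ^ (Fintype.card ι - I.card) := by
    rw [Measure.pi_pi, Finset.prod_const, nearTriangle,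
      μT_openTriangle one_zero_mem_T zero_one_mem_T hvT hv.1]
    simp [Fintype.card_subtype_compl]
  rw [hsplit, (measurePreserving_piEquivPiSubtypeProd (fun _ ↦ μT) _).measure_preimage_equiv,
    Measure.prod_prod, hfar, hnear]
  ring

end VertexProb

section FirstVertexDecomposition

variable {n : ℕ}

/-- The samples of `n + 1` points in which the point with index `i` is the neighbour of the corner
`(1,0)` in the chain, and the other points in its far triangle are those with indices in `I`. -/
def firstVertexSet (i : Fin (n + 1)) (I : Finset (Fin n)) : Set (Fin (n + 1) → ℝ × ℝ) :=
  {ω | ω i ∈ openT ∧ i.removeNth ω ∈ farNearSet (ω i) I}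

theorem measurable_edgePoint : Measurable edgePoint := by
  unfold edgePoint
  fun_prop

theorem measurableSet_firstVertexSet (i : Fin (n + 1)) (I : Finset (Fin n)) :
    MeasurableSet (firstVertexSet i I) := by
  have heval (j : Fin (n + 1)) : Measurable fun ω : Fin (n + 1) → ℝ × ℝ ↦ ω j :=
    measurable_pi_apply j
  have hfar (j : Fin n) :
      MeasurableSet {ω : Fin (n + 1) → ℝ × ℝ | ω (i.succAbove j) ∈ farTriangle (ω i)} :=
    measurableSet_setOf_mem_openTriangle (measurable_edgePoint.comp (heval i)) (heval i)
      measurable_const (heval _)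
  have hnear (j : Fin n) :
      MeasurableSet {ω : Fin (n + 1) → ℝ × ℝ | ω (i.succAbove j) ∈ nearTriangle (ω i)} :=
    measurableSet_setOf_mem_openTriangle measurable_const measurable_const (heval i) (heval _)
  have heq : firstVertexSet i I = {ω | ω i ∈ openT} ∩
      ((⋂ j ∈ I, {ω | ω (i.succAbove j) ∈ farTriangle (ω i)}) ∩
        ⋂ j ∉ I, {ω | ω (i.succAbove j) ∈ nearTriangle (ω i)}) := by
    ext ω
    simp [firstVertexSet, farNearSet, Fin.removeNth_apply]
  rw [heq]
  exact (heval i measurableSet_openT).inter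
    ((I.measurableSet_biInter fun j _ ↦ hfar j).inter
      (.iInter fun j ↦ .iInter fun _ ↦ hnear j))

theorem orient_pos_of_mem_firstVertexSet {i l : Fin (n + 1)} {I : Finset (Fin n)}
    {ω : Fin (n + 1) → ℝ × ℝ} (hω : ω ∈ firstVertexSet i I) (hl : l ≠ i) :
    0 < orient (ω i) (1, 0) (ω l) := by
  obtain ⟨j, rfl⟩ := Fin.exists_succAbove_eq hl
  exact orient_pos_of_mem_farNearSet hω.1 hω.2 j

theorem pairwise_disjoint_firstVertexSet :
    Pairwise fun x y : Fin (n + 1) × Finset (Fin n) ↦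
      Disjoint (firstVertexSet x.1 x.2) (firstVertexSet y.1 y.2) := by
  rintro ⟨i, I⟩ ⟨j, J⟩ hne
  refine Set.disjoint_left.2 fun ω hi hj ↦ hne ?_
  obtain rfl : i = j := by
    by_contra hij
    have hij_pos := orient_pos_of_mem_firstVertexSet hi (Ne.symm hij)
    have hji_pos := orient_pos_of_mem_firstVertexSet hj hij
    rw [← orient_rotate, orient_swap] at hji_pos
    linarith
  exact congrArg (Prod.mk i) (eq_of_mem_farNearSet hi.2 hj.2)

theorem vertexCount_eq_add_one_of_mem_firstVertexSet {i : Fin (n + 1)} {I : Finset (Fin n)}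
    {ω : Fin (n + 1) → ℝ × ℝ} (hω : ω ∈ firstVertexSet i I) :
    vertexCount {(1, 0), (0, 1)} ω =
      vertexCount {ω i, (0, 1)} (fun j : I ↦ i.removeNth ω j) + 1 := by
  rw [← vertexCount_insertNth_eq_add_one hω.1 hω.2, Fin.insertNth_self_removeNth]

theorem P_firstVertexSet_inter_vertexCount_eq (i : Fin (n + 1)) (I : Finset (Fin n)) (k : ℕ) :
    P (n + 1) (firstVertexSet i I ∩ {ω | vertexCount {(1, 0), (0, 1)} ω = k + 1}) =
      (∫⁻ v, ENNReal.ofReal (orient (edgePoint v) v (0, 1)) ^ I.card *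
        ENNReal.ofReal (orient (1, 0) (0, 1) v) ^ (n - I.card) ∂μT) * vertexProb I.card k := by
  let S : Set ((ℝ × ℝ) × (Fin n → ℝ × ℝ)) := {x | x.1 ∈ openT ∧
    x.2 ∈ farNearSet x.1 I ∧ vertexCount {x.1, (0, 1)} (fun j : I ↦ x.2 j) = k}
  let e := MeasurableEquiv.piFinSuccAbove (fun _ : Fin (n + 1) ↦ ℝ × ℝ) i
  have hpre : firstVertexSet i I ∩ {ω | vertexCount {(1, 0), (0, 1)} ω = k + 1} = e ⁻¹' S := by
    ext ω
    have hcount : ω ∈ firstVertexSet i I → (vertexCount {(1, 0), (0, 1)} ω = k + 1 ↔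
        vertexCount {ω i, (0, 1)} (fun j : I ↦ i.removeNth ω j) = k) := fun hω ↦ by
      rw [vertexCount_eq_add_one_of_mem_firstVertexSet hω, Nat.add_right_cancel_iff]
    exact (and_congr_right hcount).trans and_assoc
  have hS : MeasurableSet S := by
    rw [← e.measurableSet_preimage, ← hpre]
    exact (measurableSet_firstVertexSet i I).inter (measurableSet_vertexCount_eq _ _ _)
  have hslice : ∀ᵐ v ∂μT, Measure.pi (fun _ ↦ μT) (Prod.mk v ⁻¹' S) =
      ENNReal.ofReal (orient (edgePoint v) v (0, 1)) ^ I.card *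
        ENNReal.ofReal (orient (1, 0) (0, 1) v) ^ (n - I.card) * vertexProb I.card k := by
    filter_upwards [ae_mem_openT] with v hv
    convert pi_μT_farNearSet hv I k using 2
    · ext η
      simp [S, hv]
    · rw [Fintype.card_fin]
  rw [P, hpre, (measurePreserving_piFinSuccAbove (fun _ ↦ μT) i).measure_preimage_equiv,
    Measure.prod_apply hS, lintegral_congr_ae hslice, lintegral_mul_const]
  simp only [orient_apply]
  have := measurable_edgePoint
  fun_prop

end FirstVertexDecomposition

section GeneralPosition

variable {κ : Type*} {n : ℕ}

/-- Families of points in the interior of `T` such that no two of the points are collinear with one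
of the corners `(1,0)` and `(0,1)`. -/
def IsGeneric {ι : Type*} (ω : ι → ℝ × ℝ) : Prop :=
  (∀ i, ω i ∈ openT) ∧
    ∀ A ∈ ({(1, 0), (0, 1)} : Set (ℝ × ℝ)), Pairwise fun i j ↦ orient (ω i) A (ω j) ≠ 0

theorem notMem_openT_of_mem_corners {A : ℝ × ℝ} (hA : A ∈ ({(1, 0), (0, 1)} : Set (ℝ × ℝ))) :
    A ∉ openT := by
  rcases hA with rfl | rfl <;> simp [mem_openT]

theorem ae_orient_ne_zero {A B : ℝ × ℝ} (h : A ≠ B) : ∀ᵐ p ∂μT, orient A B p ≠ 0 := by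
  have hnull : ∀ᵐ p, orient A B p ≠ 0 := by
    simpa [ae_iff] using volume_setOf_orient_eq_zero h
  exact Measure.ae_smul_measure (ae_restrict_of_ae hnull) 2

theorem ae_eval_eval_of_ae_ae {i j : Fin n} (hij : i ≠ j) {p : ℝ × ℝ → ℝ × ℝ → Prop}
    (hp : MeasurableSet {x : (ℝ × ℝ) × (ℝ × ℝ) | p x.1 x.2}) (h : ∀ᵐ v ∂μT, ∀ᵐ w ∂μT, p v w) :
    ∀ᵐ ω ∂P n, p (ω i) (ω j) := by
  obtain _ | n := n
  · exact i.elim0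
  obtain ⟨l, rfl⟩ := Fin.exists_succAbove_eq hij.symm
  have hmap : Measurable fun x : (ℝ × ℝ) × (Fin n → ℝ × ℝ) ↦ (x.1, x.2 l) := by fun_prop
  have hmeas : MeasurableSet {x : (ℝ × ℝ) × (Fin n → ℝ × ℝ) | p x.1 (x.2 l)} :=
    measurableSet_preimage hmap hp
  have hprod : ∀ᵐ x ∂μT.prod (P n), p x.1 (x.2 l) := by
    rw [Measure.ae_prod_iff_ae_ae hmeas]
    filter_upwards [h] with v hv
    exact Measure.tendsto_eval_ae_ae.eventually hv
  exact (measurePreserving_piFinSuccAbove (fun _ ↦ μT) i).quasiMeasurePreserving.ae hprod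

theorem ae_isGeneric (n : ℕ) : ∀ᵐ ω ∂P n, IsGeneric ω := by
  have hinterior : ∀ᵐ ω ∂P n, ∀ i, ω i ∈ openT :=
    ae_all_iff.2 fun i ↦ Measure.tendsto_eval_ae_ae.eventually ae_mem_openT
  have hcollinear {A : ℝ × ℝ} (hA : A ∈ ({(1, 0), (0, 1)} : Set (ℝ × ℝ))) :
      ∀ᵐ ω ∂P n, Pairwise fun i j ↦ orient (ω i) A (ω j) ≠ 0 := by
    refine ae_all_iff.2 fun i ↦ ae_all_iff.2 fun j ↦ ?_
    by_cases hij : i = j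
    · simp [hij]
    have hpair : ∀ᵐ v ∂μT, ∀ᵐ w ∂μT, orient v A w ≠ 0 := by
      filter_upwards [ae_mem_openT] with v hv
      exact ae_orient_ne_zero (ne_of_mem_of_not_mem hv (notMem_openT_of_mem_corners hA))
    have hmeas : MeasurableSet {x : (ℝ × ℝ) × (ℝ × ℝ) | orient x.1 A x.2 ≠ 0} := by
      simp only [orient_apply]
      exact (measurableSet_eq_fun (by fun_prop) measurable_const).compl
    filter_upwards [ae_eval_eval_of_ae_ae hij hmeas hpair] with ω hω _ using hω
  have hcorners : ∀ᵐ ω ∂P n, ∀ A ∈ ({(1, 0), (0, 1)} : Set (ℝ × ℝ)),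
      Pairwise fun i j ↦ orient (ω i) A (ω j) ≠ 0 :=
    (ae_ball_iff (Set.to_countable _)).2 fun _ hA ↦ hcollinear hA
  exact hinterior.and hcorners

theorem exists_forall_orient_pos [Finite κ] [Nonempty κ] {ω : κ → ℝ × ℝ}
    (hω : IsGeneric ω) :
    ∃ i, ∀ j ≠ i, 0 < orient (ω i) (1, 0) (ω j) := by
  obtain ⟨i, hi⟩ := Finite.exists_min fun i ↦ (ω i).2 / (1 - (ω i).1)
  refine ⟨i, fun j hj ↦ (hω.2 _ (by simp) hj.symm).symm.lt_of_le ?_⟩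
  have hlt (l : κ) : 0 < 1 - (ω l).1 := by linarith [mem_openT.1 (hω.1 l)]
  have h := (div_le_div_iff₀ (hlt i) (hlt j)).1 (hi j)
  rw [orient_apply]
  linarith

theorem exists_mem_firstVertexSet {ω : Fin (n + 1) → ℝ × ℝ} (hω : IsGeneric ω) :
    ∃ i I, ω ∈ firstVertexSet i I := by
  classical
  obtain ⟨i, hi⟩ := exists_forall_orient_pos hω
  refine ⟨i, Finset.univ.filter fun j ↦ ω (i.succAbove j) ∈ farTriangle (ω i), hω.1 i,
    fun j hj ↦ ?_, fun j hj ↦ ?_⟩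
  · exact (Finset.mem_filter.1 hj).2
  · have hne := Fin.succAbove_ne i j
    refine (mem_farTriangle_or_mem_nearTriangle (hω.1 i) (hω.1 _) (hi _ hne)
      (hω.2 _ (by simp) hne.symm)).resolve_left fun hfar ↦ hj ?_
    exact Finset.mem_filter.2 ⟨Finset.mem_univ j, hfar⟩

theorem injective_of_isGeneric {ω : κ → ℝ × ℝ} (hω : IsGeneric ω) :
    Function.Injective ω := by
  intro i j hij
  by_contra hne
  exact hω.2 (1, 0) (by simp) hne (by rw [hij, orient_self_left])

theorem corners_subset_extremePoints {ω : κ → ℝ × ℝ} (hω : ∀ i, ω i ∈ openT) :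
    {(1, 0), (0, 1)} ⊆ (convexHull ℝ (Set.range ω ∪ {(1, 0), (0, 1)})).extremePoints ℝ := by
  have hlt (i : κ) : (ω i).1 < 1 ∧ (ω i).2 < 1 := by
    obtain ⟨hsum, h₁, h₂⟩ := mem_openT.1 (hω i)
    constructor <;> linarith
  rw [Set.insert_subset_iff, Set.singleton_subset_iff]
  constructor
  · refine mem_extremePoints_convexHull_of_forall_lt (LinearMap.fst ℝ ℝ ℝ).toAffineMap (by simp) ?_
    rintro p ⟨⟨i, rfl⟩ | rfl | rfl, hne⟩
    exacts [(hlt i).1, (hne rfl).elim, zero_lt_one]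
  · refine mem_extremePoints_convexHull_of_forall_lt (LinearMap.snd ℝ ℝ ℝ).toAffineMap (by simp) ?_
    rintro p ⟨⟨i, rfl⟩ | rfl | rfl, hne⟩
    exacts [(hlt i).2, zero_lt_one, (hne rfl).elim]

theorem N_eq_vertexCount {ω : Fin n → ℝ × ℝ} (hω : IsGeneric ω) :
    N n ω = vertexCount {(1, 0), (0, 1)} ω := by
  have hcorner (i : Fin n) : ω i ∉ ({(1, 0), (0, 1)} : Set (ℝ × ℝ)) := fun h ↦
    notMem_openT_of_mem_corners h (hω.1 i)
  rw [N, Tchain, ncard_extremePoints_convexHull_range_union (Set.toFinite _)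
    (injective_of_isGeneric hω) hcorner (corners_subset_extremePoints hω.1),
    Set.ncard_pair (by simp), Nat.add_sub_cancel]

end GeneralPosition

section Recursion

variable {n : ℕ}

theorem P_eq_sum_firstVertexSet {E : Set (Fin (n + 1) → ℝ × ℝ)} (hE : MeasurableSet E) :
    P (n + 1) E = ∑ i, ∑ I, P (n + 1) (firstVertexSet i I ∩ E) := by
  rw [measure_eq_sum_measure_inter (s := fun x : Fin (n + 1) × Finset (Fin n) ↦
    firstVertexSet x.1 x.2) (fun _ ↦ measurableSet_firstVertexSet _ _)
    pairwise_disjoint_firstVertexSet ?_ hE, Fintype.sum_prod_type]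
  filter_upwards [ae_isGeneric (n + 1)] with ω hω
  obtain ⟨i, I, h⟩ := exists_mem_firstVertexSet hω
  exact ⟨(i, I), h⟩

theorem vertexProb_zero_zero : vertexProb 0 0 = 1 := by
  simp [vertexProb, vertexCount, Set.eq_empty_of_isEmpty]

theorem vertexProb_zero_succ (k : ℕ) : vertexProb 0 (k + 1) = 0 := by
  simp [vertexProb, vertexCount, Set.eq_empty_of_isEmpty]

theorem vertexProb_succ_zero (n : ℕ) : vertexProb (n + 1) 0 = 0 := by
  refine measure_eq_zero_iff_ae_notMem.2 ?_
  filter_upwards [ae_isGeneric (n + 1)] with ω hω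
  obtain ⟨i, I, h⟩ := exists_mem_firstVertexSet hω
  rw [vertexCount_eq_add_one_of_mem_firstVertexSet h]
  exact Nat.succ_ne_zero _

theorem vertexProb_succ_succ (n k : ℕ) : vertexProb (n + 1) (k + 1) =
    ∑ m ∈ Finset.range (n + 1), ENNReal.ofReal (farCountProb n m) * vertexProb m k := by
  rw [vertexProb, P_eq_sum_firstVertexSet (measurableSet_vertexCount_eq _ _ _)]
  simp only [P_firstVertexSet_inter_vertexCount_eq, Finset.sum_const, Finset.card_univ,
    Fintype.card_fin, nsmul_eq_mul]
  rw [← Finset.powerset_univ, Finset.sum_powerset_apply_card (fun m ↦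
    (∫⁻ v, ENNReal.ofReal (orient (edgePoint v) v (0, 1)) ^ m *
      ENNReal.ofReal (orient (1, 0) (0, 1) v) ^ (n - m) ∂μT) * vertexProb m k),
    Finset.card_univ, Fintype.card_fin, Finset.mul_sum]
  refine Finset.sum_congr rfl fun m hm ↦ ?_
  rw [← mul_lintegral_orient_pow_mul_orient_pow (Nat.lt_succ_iff.1 (Finset.mem_range.1 hm)),
    nsmul_eq_mul]
  push_cast
  ring

theorem toReal_vertexProb (n k : ℕ) : (vertexProb n k).toReal = vertexFormula n k := by
  induction k generalizing n with
  | zero =>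
    cases n with
    | zero => rw [vertexProb_zero_zero, vertexFormula_zero_zero, ENNReal.toReal_one]
    | succ n => rw [vertexProb_succ_zero, vertexFormula_succ_zero, ENNReal.toReal_zero]
  | succ k ih =>
    cases n with
    | zero => rw [vertexProb_zero_succ, vertexFormula_zero_succ, ENNReal.toReal_zero]
    | succ n =>
      have hfinite (m : ℕ) : ENNReal.ofReal (farCountProb n m) * vertexProb m k ≠ ⊤ :=
        ENNReal.mul_ne_top ENNReal.ofReal_ne_top (measure_ne_top _ _)
      rw [vertexProb_succ_succ, vertexFormula_succ_succ,
        ENNReal.toReal_sum fun m _ ↦ hfinite m]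
      refine Finset.sum_congr rfl fun m hm ↦ ?_
      rw [ENNReal.toReal_mul, ih, ENNReal.toReal_ofReal
        (farCountProb_nonneg (Nat.lt_succ_iff.1 (Finset.mem_range.1 hm)))]

end Recursion

/-- `P(N_n = k) = Σ_{ℓ=k}^n (-1)^{ℓ+k} C(n,ℓ) c(k,ℓ)` for `1 ≤ n`, `k ≤ n`. -/
theorem stmt11 (n k : ℕ) (hn : 1 ≤ n) (hk : k ≤ n) :
    (P n {ω | N n ω = k}).toReal
      = ∑ l ∈ Finset.Icc k n, (-1 : ℝ) ^ (l + k) * (n.choose l : ℝ) * c k l := by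
  have hcount : {ω | N n ω = k} =ᵐ[P n] {ω | vertexCount {(1, 0), (0, 1)} ω = k} := by
    filter_upwards [ae_isGeneric n] with ω hω
    exact congrArg (· = k) (N_eq_vertexCount hω)
  rw [measure_congr hcount, ← vertexProb, toReal_vertexProb, vertexFormula_eq_sum_Icc]

end
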